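/- In the tensor-triangulated adjunction setting described in the context, let G be a strong ⊕-generator for 𝒯. Then the following are equivalent: (1) f_*G is a strong ⊕-generator for 𝒮; (2) the unit 1_𝒮 belongs to ⟨f_*G⟩̄_n for some n ≥ 0. -/

import Mathlib

/-!
If `f_* G` generates in finitely many steps, then in particular `𝟙_ S` is reached. Conversely, let
`𝟙_ S ∈ ⟨f_* G⟩̄ₙ` and `⟨G⟩̄ₗ = 𝒯`. Applying the exact coproduct-preserving functor `- ⊗ X` to the
unit gives `X ∈ ⟨f_* G ⊗ X⟩̄ₙ` (`map_mem_bigLevel`). By the projection formula `f_* G ⊗ X` is of the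
form `f_* Y`, and the retracts of objects in the image of `f_*` are closed under shifts, coproducts
and retracts, so `⟨f_* G ⊗ X⟩̄₁` consists of retracts of objects `f_* Y`
(`exists_retract_of_mem_bigOne_map`); as `Y ∈ ⟨G⟩̄ₗ`, all of them lie in `⟨f_* G⟩̄ₗ`. Hence `X` is an
iterated extension, of length `n`, of objects of `⟨f_* G⟩̄ₗ`, and it remains to know that
extensions of `⟨K⟩̄ₐ` by `⟨K⟩̄_b` lie in `⟨K⟩̄_{a+b}` (`mem_bigLevel_of_triangle`).

The last fact is usually deduced from the octahedral axiom, which is not available here: the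
categories are only `Pretriangulated`. It still holds because the levels are closed under direct
summands and finite sums. Where the octahedral axiom would produce an isomorphism, the remaining
axioms give a pair of maps whose composite agrees with the identity on one term of a triangle; the
difference factors through another term, so the object in question is a summand of a direct sum of
two objects of the expected level.
-/

open CategoryTheory Limits Pretriangulated MonoidalCategory

universe v u v₂ u₂

namespace Stmt

variable {C : Type u} [Category.{v} C]

/-- `X` is a retract (direct summand) of `Y`. -/
def IsRetract (X Y : C) : Prop := ∃ (i : X ⟶ Y) (p : Y ⟶ X), i ≫ p = 𝟙 X

section Big

variable [HasZeroObject C] [Preadditive C] [HasShift C ℤ]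
  [∀ n : ℤ, (shiftFunctor C n).Additive] [Pretriangulated C]

/-- The objects of `⟨G⟩̄₁`: the smallest collection of objects containing `G` that is
closed under shifts, arbitrary small coproducts, and direct summands (retracts). -/
def bigOne (G : C) : Set C :=
  ⋂₀ {S : Set C | G ∈ S ∧ (∀ X ∈ S, ∀ n : ℤ, (X⟦n⟧ : C) ∈ S) ∧
      (∀ (ι : Type v) (f : ι → C) (_ : HasCoproduct f), (∀ i, f i ∈ S) → (∐ f) ∈ S) ∧
      (∀ X Y : C, Y ∈ S → IsRetract X Y → X ∈ S)}

/-- The objects of `⟨G⟩̄ₙ`: `⟨G⟩̄₀` consists of the objects isomorphic to `0`;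
`⟨G⟩̄₁` is `bigOne G`; for `n ≥ 2`, `⟨G⟩̄ₙ` consists of the direct summands of objects `E`
fitting in a distinguished triangle `A ⟶ E ⟶ B ⟶ A⟦1⟧` with `A ∈ ⟨G⟩̄ₙ₋₁` and `B ∈ ⟨G⟩̄₁`. -/
def bigLevel (G : C) : ℕ → Set C
  | 0 => {X | IsZero X}
  | 1 => bigOne G
  | (n + 2) => {X | ∃ (E A B : C) (f : A ⟶ E) (g : E ⟶ B) (h : B ⟶ A⟦(1 : ℤ)⟧),
      (Triangle.mk f g h ∈ distTriang C) ∧ A ∈ bigLevel G (n + 1) ∧ B ∈ bigOne G ∧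
      IsRetract X E}

end Big

lemma IsRetract.refl (X : C) : IsRetract X X := ⟨𝟙 X, 𝟙 X, by simp⟩

lemma IsRetract.trans {X Y Z : C} (h : IsRetract X Y) (h' : IsRetract Y Z) : IsRetract X Z := by
  obtain ⟨i, p, hip⟩ := h
  obtain ⟨j, q, hjq⟩ := h'
  exact ⟨i ≫ j, q ≫ p, by simp [reassoc_of% hjq, hip]⟩

lemma IsRetract.of_iso {X Y : C} (e : X ≅ Y) : IsRetract X Y := ⟨e.hom, e.inv, by simp⟩

lemma IsRetract.map {D : Type u₂} [Category.{v₂} D] (Φ : C ⥤ D) {X Y : C} (h : IsRetract X Y) :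
    IsRetract (Φ.obj X) (Φ.obj Y) := by
  obtain ⟨i, p, hip⟩ := h
  exact ⟨Φ.map i, Φ.map p, by rw [← Φ.map_comp, hip, Φ.map_id]⟩

/-- A coproduct of retracts is a retract of the coproduct. -/
lemma IsRetract.sigma {ι : Type v} {f g : ι → C} [HasCoproduct f] [HasCoproduct g]
    (h : ∀ i, IsRetract (f i) (g i)) : IsRetract (∐ f) (∐ g) := by
  choose i p hip using h
  refine ⟨Limits.Sigma.map i, Limits.Sigma.map p, ?_⟩
  ext k
  simp [reassoc_of% (hip k)]

section BigLemmas

set_option linter.unusedSectionVars false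

variable [HasZeroObject C] [Preadditive C] [HasShift C ℤ]
  [∀ n : ℤ, (shiftFunctor C n).Additive] [Pretriangulated C]

lemma triangle_lift₂ {A E B X : C} {f : A ⟶ E} {g : E ⟶ B} {h : B ⟶ A⟦(1 : ℤ)⟧}
    (hT : Triangle.mk f g h ∈ distTriang C) (x : X ⟶ E) (hx : x ≫ g = 0) :
    ∃ y : X ⟶ A, x = y ≫ f :=
  Triangle.coyoneda_exact₂ _ hT x hx

lemma triangle_lift₃ {A E B X : C} {f : A ⟶ E} {g : E ⟶ B} {h : B ⟶ A⟦(1 : ℤ)⟧}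
    (hT : Triangle.mk f g h ∈ distTriang C) (x : X ⟶ B) (hx : x ≫ h = 0) :
    ∃ y : X ⟶ E, x = y ≫ g :=
  Triangle.coyoneda_exact₃ _ hT x hx

lemma triangle_desc₂ {A E B X : C} {f : A ⟶ E} {g : E ⟶ B} {h : B ⟶ A⟦(1 : ℤ)⟧}
    (hT : Triangle.mk f g h ∈ distTriang C) (x : E ⟶ X) (hx : f ≫ x = 0) :
    ∃ y : B ⟶ X, x = g ≫ y :=
  Triangle.yoneda_exact₂ _ hT x hx

lemma triangle_map₂ {A E B A' E' B' : C} {f : A ⟶ E} {g : E ⟶ B} {h : B ⟶ A⟦(1 : ℤ)⟧}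
    {f' : A' ⟶ E'} {g' : E' ⟶ B'} {h' : B' ⟶ A'⟦(1 : ℤ)⟧}
    (hT : Triangle.mk f g h ∈ distTriang C) (hT' : Triangle.mk f' g' h' ∈ distTriang C)
    (a : A ⟶ A') (c : B ⟶ B') (comm : h ≫ a⟦(1 : ℤ)⟧' = c ≫ h') :
    ∃ b : E ⟶ E', f ≫ b = a ≫ f' ∧ g ≫ c = b ≫ g' :=
  complete_distinguished_triangle_morphism₂ _ _ hT hT' a c comm

lemma triangle_desc₁ {A E B X : C} {f : A ⟶ E} {g : E ⟶ B} {h : B ⟶ A⟦(1 : ℤ)⟧}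
    (hT : Triangle.mk f g h ∈ distTriang C) (x : A ⟶ X) (hx : h ≫ x⟦(1 : ℤ)⟧' = 0) :
    ∃ y : E ⟶ X, x = f ≫ y := by
  obtain ⟨b, hb, -⟩ := triangle_map₂ hT (contractible_distinguished X) x 0
    (by rw [hx, zero_comp])
  exact ⟨b, (hb.trans (Category.comp_id x)).symm⟩

lemma self_mem_bigOne (G : C) : G ∈ bigOne G := fun _ hS => hS.1

lemma bigOne_shift {G X : C} (hX : X ∈ bigOne G) (n : ℤ) : (X⟦n⟧ : C) ∈ bigOne G :=
  fun S hS => hS.2.1 X (hX S hS) n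

lemma bigOne_coproduct {G : C} {ι : Type v} (f : ι → C) [h : HasCoproduct f]
    (hf : ∀ i, f i ∈ bigOne G) : (∐ f) ∈ bigOne G :=
  fun S hS => hS.2.2.1 ι f h (fun i => hf i S hS)

lemma bigOne_retract {G X Y : C} (hY : Y ∈ bigOne G) (h : IsRetract X Y) : X ∈ bigOne G :=
  fun S hS => hS.2.2.2 X Y (hY S hS) h

lemma isZero_mem_bigOne (G : C) {X : C} (hX : IsZero X) : X ∈ bigOne G :=
  bigOne_retract (self_mem_bigOne G) ⟨0, 0, hX.eq_of_src _ _⟩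

lemma bigLevel_retract {G X Y : C} {n : ℕ} (hY : Y ∈ bigLevel G n) (h : IsRetract X Y) :
    X ∈ bigLevel G n := by
  match n with
  | 0 =>
    obtain ⟨i, p, hip⟩ := h
    have hY : IsZero Y := hY
    exact (IsZero.iff_id_eq_zero X).2 (by rw [← hip, hY.eq_of_tgt i 0, zero_comp])
  | 1 => exact bigOne_retract hY h
  | n + 2 =>
    obtain ⟨E, A, B, f, g, k, hT, hA, hB, hYE⟩ := hY
    exact ⟨E, A, B, f, g, k, hT, hA, hB, h.trans hYE⟩

lemma bigLevel_succ {G X : C} {n : ℕ} (hX : X ∈ bigLevel G n) : X ∈ bigLevel G (n + 1) := by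
  match n with
  | 0 => exact isZero_mem_bigOne G hX
  | n + 1 =>
    exact ⟨X, X, _, 𝟙 X, 0, 0, contractible_distinguished X, hX,
      isZero_mem_bigOne G (isZero_zero C), IsRetract.refl X⟩

lemma bigLevel_mono (G : C) : Monotone (bigLevel G) :=
  monotone_nat_of_le_succ fun _ _ hX => bigLevel_succ hX

lemma bigOne_sum {G X₁ X₂ Z : C} (h₁ : X₁ ∈ bigOne G) (h₂ : X₂ ∈ bigOne G)
    (p₁ : Z ⟶ X₁) (i₁ : X₁ ⟶ Z) (p₂ : Z ⟶ X₂) (i₂ : X₂ ⟶ Z)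
    (h : p₁ ≫ i₁ + p₂ ≫ i₂ = 𝟙 Z) : Z ∈ bigOne G := by
  let X : ULift.{v} Bool → C := fun b => bif b.down then X₁ else X₂
  have hX : (∐ X) ∈ bigOne G := bigOne_coproduct X (by
    rintro ⟨_ | _⟩
    · exact h₂
    · exact h₁)
  let d : ∀ b, X b ⟶ Z := fun b => match b with
    | ⟨true⟩ => i₁
    | ⟨false⟩ => i₂
  let ι₁ : X₁ ⟶ ∐ X := Sigma.ι X ⟨true⟩
  let ι₂ : X₂ ⟶ ∐ X := Sigma.ι X ⟨false⟩
  have e₁ : ι₁ ≫ Sigma.desc d = i₁ := Sigma.ι_desc d ⟨true⟩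
  have e₂ : ι₂ ≫ Sigma.desc d = i₂ := Sigma.ι_desc d ⟨false⟩
  exact bigOne_retract hX ⟨p₁ ≫ ι₁ + p₂ ≫ ι₂, Sigma.desc d, by
    rw [Preadditive.add_comp, Category.assoc, Category.assoc, e₁, e₂, h]⟩

/-- Closure of the levels under binary sums and summands in one statement: `Z` is a summand of
`X₁ ⊕ X₂` as soon as its identity is a sum of two maps factoring through `X₁` and `X₂`. -/
lemma bigLevel_sum {G : C} {n : ℕ} : ∀ {X₁ X₂ Z : C}, X₁ ∈ bigLevel G n → X₂ ∈ bigLevel G n →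
    ∀ (p₁ : Z ⟶ X₁) (i₁ : X₁ ⟶ Z) (p₂ : Z ⟶ X₂) (i₂ : X₂ ⟶ Z),
      p₁ ≫ i₁ + p₂ ≫ i₂ = 𝟙 Z → Z ∈ bigLevel G n := by
  induction n with
  | zero =>
    intro X₁ X₂ Z h₁ h₂ p₁ i₁ p₂ i₂ h
    have h₁ : IsZero X₁ := h₁
    have h₂ : IsZero X₂ := h₂
    exact (IsZero.iff_id_eq_zero Z).2
      (by rw [← h, h₁.eq_of_tgt p₁ 0, h₂.eq_of_tgt p₂ 0]; simp)
  | succ n ih =>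
    intro X₁ X₂ Z h₁ h₂ p₁ i₁ p₂ i₂ h
    match n with
    | 0 => exact bigOne_sum h₁ h₂ p₁ i₁ p₂ i₂ h
    | n + 1 =>
      obtain ⟨E₁, A₁, B₁, f₁, g₁, k₁, hT₁, hA₁, hB₁, j₁, q₁, hr₁⟩ := h₁
      obtain ⟨E₂, A₂, B₂, f₂, g₂, k₂, hT₂, hA₂, hB₂, j₂, q₂, hr₂⟩ := h₂
      let t : Bool → Triangle C := fun b =>
        bif b then Triangle.mk f₁ g₁ k₁ else Triangle.mk f₂ g₂ k₂
      have ht : productTriangle t ∈ distTriang C := productTriangle_distinguished t (by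
        rintro (_ | _)
        · exact hT₂
        · exact hT₁)
      -- The product of a two-element family is also its sum.
      have key : ∀ (Y : Bool → C), ∃ (a : Y true ⟶ ∏ᶜ Y) (b : Y false ⟶ ∏ᶜ Y),
          Pi.π Y true ≫ a + Pi.π Y false ≫ b = 𝟙 _ ∧ a ≫ Pi.π Y true = 𝟙 _ ∧
            a ≫ Pi.π Y false = 0 ∧ b ≫ Pi.π Y true = 0 ∧ b ≫ Pi.π Y false = 𝟙 _ := by
        intro Y
        refine ⟨Pi.lift (fun c => match c with
          | true => 𝟙 _
          | false => 0), Pi.lift (fun c => match c with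
          | true => 0
          | false => 𝟙 _), ?_, ?_, ?_, ?_, ?_⟩
        · apply Pi.hom_ext
          rintro (_ | _) <;> simp
        all_goals simp
      obtain ⟨a₁, a₂, ha, -⟩ := key (fun b => (t b).obj₁)
      obtain ⟨c₁, c₂, hc, -⟩ := key (fun b => (t b).obj₃)
      obtain ⟨b₁, b₂, -, h₁₁, h₁₂, h₂₁, h₂₂⟩ := key (fun b => (t b).obj₂)
      have hA : (productTriangle t).obj₁ ∈ bigLevel G (n + 1) := ih hA₁ hA₂ _ a₁ _ a₂ ha
      have hB : (productTriangle t).obj₃ ∈ bigOne G :=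
        bigOne_sum hB₁ hB₂ _ c₁ _ c₂ hc
      let b₁' : E₁ ⟶ (productTriangle t).obj₂ := b₁
      let b₂' : E₂ ⟶ (productTriangle t).obj₂ := b₂
      let π₁ : (productTriangle t).obj₂ ⟶ E₁ := Pi.π (fun b => (t b).obj₂) true
      let π₂ : (productTriangle t).obj₂ ⟶ E₂ := Pi.π (fun b => (t b).obj₂) false
      have h₁₁ : b₁' ≫ π₁ = 𝟙 _ := h₁₁
      have h₁₂ : b₁' ≫ π₂ = 0 := h₁₂
      have h₂₁ : b₂' ≫ π₁ = 0 := h₂₁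
      have h₂₂ : b₂' ≫ π₂ = 𝟙 _ := h₂₂
      have hr : (p₁ ≫ j₁ ≫ b₁' + p₂ ≫ j₂ ≫ b₂') ≫ (π₁ ≫ q₁ ≫ i₁ + π₂ ≫ q₂ ≫ i₂) = 𝟙 Z := by
        simp only [Preadditive.add_comp, Preadditive.comp_add, Category.assoc,
          reassoc_of% h₁₁, reassoc_of% h₁₂, reassoc_of% h₂₁, reassoc_of% h₂₂, zero_comp, comp_zero,
          reassoc_of% hr₁, reassoc_of% hr₂, h, add_zero, zero_add]
      exact ⟨_, _, _, _, _, _, ht, hA, hB, _, _, hr⟩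

/-- In a distinguished triangle `H ⟶ E ⟶ P` whose first map factors through `Q`, the object `E` is
a summand of `E' ⊕ P`, where `E'` is an extension of `P` by `Q`. -/
lemma mem_of_factors {G H E P Q : C} {n : ℕ} {k : H ⟶ E} {π : E ⟶ P} {δ : P ⟶ H⟦(1 : ℤ)⟧}
    (hT : Triangle.mk k π δ ∈ distTriang C) (s : H ⟶ Q) (j : Q ⟶ E) (hk : s ≫ j = k)
    (hQ : Q ∈ bigLevel G (n + 1)) (hP : P ∈ bigOne G) : E ∈ bigLevel G (n + 2) := by
  obtain ⟨E', q, r, hE'⟩ := distinguished_cocone_triangle₂ (δ ≫ s⟦(1 : ℤ)⟧')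
  obtain ⟨e₁, he₁, -⟩ := triangle_map₂ hT hE' s (𝟙 P) (Category.id_comp _).symm
  have hz : δ ≫ k⟦(1 : ℤ)⟧' = 0 := comp_distTriang_mor_zero₃₁ _ hT
  -- `j` extends along `Q ⟶ E'`, since `P[-1] ⟶ H ⟶ Q ⟶ E` vanishes.
  obtain ⟨e₂, he₂⟩ := triangle_desc₁ hE' j
    (by rw [Category.assoc, ← Functor.map_comp, hk, hz])
  obtain ⟨w, hw⟩ := triangle_desc₂ hT (𝟙 E - e₁ ≫ e₂) (by
    rw [Preadditive.comp_sub, reassoc_of% he₁, ← he₂, hk, Category.comp_id, sub_self])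
  have hE'mem : E' ∈ bigLevel G (n + 2) := ⟨E', Q, P, q, r, _, hE', hQ, hP, IsRetract.refl _⟩
  have hPmem : P ∈ bigLevel G (n + 2) := bigLevel_mono G (by omega : 1 ≤ n + 2) hP
  exact bigLevel_sum hE'mem hPmem e₁ e₂ π w (by rw [← hw]; abel)

/-- Additivity of levels under extensions, without the octahedral axiom. -/
lemma mem_bigLevel_of_triangle {G : C} {a b : ℕ} : ∀ {A E Z : C} {f : A ⟶ E} {g : E ⟶ Z}
    {h : Z ⟶ A⟦(1 : ℤ)⟧}, Triangle.mk f g h ∈ distTriang C →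
    A ∈ bigLevel G (a + 1) → Z ∈ bigLevel G (b + 1) → E ∈ bigLevel G (a + b + 2) := by
  induction b with
  | zero =>
    intro A E Z f g h hT hA hZ
    exact ⟨E, A, Z, f, g, h, hT, hA, hZ, IsRetract.refl _⟩
  | succ b ih =>
    intro A E Z f g h hT hA hZ
    obtain ⟨Z', B, P, f', g', h', hT', hB, hP, i, p, hip⟩ := hZ
    -- `H` is the fibre of `E ⟶ P`, and `H'` the extension of `B` by `A` pulled back from `E`; the
    -- octahedral axiom would identify the two.
    obtain ⟨H, k, δ, hH⟩ := distinguished_cocone_triangle₁ (g ≫ i ≫ g')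
    obtain ⟨H', f'', g'', hH'⟩ := distinguished_cocone_triangle₂ (f' ≫ p ≫ h)
    have hkz : k ≫ g ≫ i ≫ g' = 0 := comp_distTriang_mor_zero₁₂ _ hH
    have hgh : g ≫ h = 0 := comp_distTriang_mor_zero₂₃ _ hT
    obtain ⟨u, hu⟩ := triangle_lift₂ hT' (k ≫ g ≫ i) (by simpa using hkz)
    obtain ⟨v, -, hv⟩ := triangle_map₂ hH' hT (𝟙 A) (f' ≫ p) (by simp)
    have hu' : u ≫ f' ≫ p = k ≫ g := by
      rw [← Category.assoc, ← hu]
      simp [hip]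
    obtain ⟨t, ht⟩ := triangle_lift₃ hH' u (by
      rw [← Category.assoc f', ← Category.assoc, hu', Category.assoc, hgh, comp_zero])
    obtain ⟨w, hw⟩ := triangle_lift₂ hT (k - t ≫ v) (by
      rw [Preadditive.sub_comp, Category.assoc, ← hv, ← reassoc_of% ht, hu', sub_self])
    have hH'mem : H' ∈ bigLevel G (a + b + 2) := ih hH' hA hB
    have hAmem : A ∈ bigLevel G (a + b + 2) :=
      bigLevel_mono G (by omega : a + 1 ≤ a + b + 2) hA
    have hQ : (H' ⊞ A) ∈ bigLevel G (a + b + 2) :=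
      bigLevel_sum hH'mem hAmem biprod.fst biprod.inl biprod.snd biprod.inr biprod.total
    exact mem_of_factors (n := a + b + 1) hH (biprod.lift t w) (biprod.desc v f)
      (by rw [biprod.lift_desc, ← hw]; abel) hQ hP

/-- If `⟨W⟩̄₁` is contained in a fixed level of `K`, then every level of `W` is contained in some
level of `K`, whose index depends only on the two levels. -/
lemma bigLevel_subset_of_bigOne_subset {W K : C} {l : ℕ} (h : bigOne W ⊆ bigLevel K (l + 1))
    (n : ℕ) : bigLevel W (n + 1) ⊆ bigLevel K (n * (l + 1) + l + 1) := by
  induction n with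
  | zero =>
    exact fun X hX => bigLevel_mono K (by omega) (h hX)
  | succ n ih =>
    rintro X ⟨E, A, B, f, g, k, hT, hA, hB, hX⟩
    refine bigLevel_retract ?_ hX
    have := mem_bigLevel_of_triangle hT (ih hA) (h hB)
    exact bigLevel_mono K (by ring_nf; omega) this

end BigLemmas

section Functors

set_option linter.unusedSectionVars false

variable [HasZeroObject C] [Preadditive C] [HasShift C ℤ]
  [∀ n : ℤ, (shiftFunctor C n).Additive] [Pretriangulated C]
  {D : Type u₂} [Category.{v} D] [HasZeroObject D] [Preadditive D] [HasShift D ℤ]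
  [∀ n : ℤ, (shiftFunctor D n).Additive] [Pretriangulated D] [HasCoproducts.{v} D]
  (Φ : C ⥤ D) [Φ.CommShift ℤ] [∀ J : Type v, PreservesColimitsOfShape (Discrete J) Φ]

lemma map_mem_bigOne {G X : C} (hX : X ∈ bigOne G) : Φ.obj X ∈ bigOne (Φ.obj G) := by
  refine hX {Y | Φ.obj Y ∈ bigOne (Φ.obj G)} ⟨self_mem_bigOne _, ?_, ?_, ?_⟩
  · intro Y hY n
    exact bigOne_retract (bigOne_shift hY n) (IsRetract.of_iso ((Φ.commShiftIso n).app Y))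
  · intro ι f _ hf
    exact bigOne_retract (bigOne_coproduct (fun i => Φ.obj (f i)) hf)
      (IsRetract.of_iso (PreservesCoproduct.iso Φ f))
  · intro Y Z hZ h
    exact bigOne_retract hZ (h.map Φ)

lemma map_mem_bigLevel [Φ.IsTriangulated] {G : C} {n : ℕ} :
    ∀ {X : C}, X ∈ bigLevel G n → Φ.obj X ∈ bigLevel (Φ.obj G) n := by
  induction n with
  | zero =>
    intro X hX
    exact Φ.map_isZero hX
  | succ n ih =>
    intro X hX
    match n with
    | 0 => exact map_mem_bigOne Φ hX
    | n + 1 =>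
      obtain ⟨E, A, B, f, g, k, hT, hA, hB, hr⟩ := hX
      exact ⟨_, _, _, _, _, _, Φ.map_distinguished _ hT, ih hA, map_mem_bigOne Φ hB, hr.map Φ⟩

/-- The retracts of objects in the image of `Φ` are closed under shifts, coproducts and retracts. -/
lemma exists_retract_of_mem_bigOne_map [HasCoproducts.{v} C] {Y : C} {X : D}
    (hX : X ∈ bigOne (Φ.obj Y)) : ∃ Z : C, IsRetract X (Φ.obj Z) := by
  refine hX {X | ∃ Z : C, IsRetract X (Φ.obj Z)} ⟨⟨Y, IsRetract.refl _⟩, ?_, ?_, ?_⟩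
  · rintro X ⟨Z, hZ⟩ n
    exact ⟨Z⟦n⟧, (hZ.map (shiftFunctor D n)).trans
      (IsRetract.of_iso ((Φ.commShiftIso n).app Z).symm)⟩
  · intro ι f _ hf
    choose Z hZ using hf
    exact ⟨∐ Z, (IsRetract.sigma hZ).trans (IsRetract.of_iso (PreservesCoproduct.iso Φ Z).symm)⟩
  · rintro X X' ⟨Z, hZ⟩ h
    exact ⟨Z, h.trans hZ⟩

lemma bigOne_subset_of_iso {X Y : C} (e : X ≅ Y) : bigOne X ⊆ bigOne Y := by
  intro Z hZ S hS
  exact hZ S ⟨hS.2.2.2 X Y hS.1 (IsRetract.of_iso e), hS.2⟩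

end Functors

section Adjunction

/- The tensor-triangulated adjunction setting: `S` (𝒮) and `T` (𝒯) are triangulated
categories admitting all small coproducts, each equipped with a symmetric monoidal
structure whose tensoring endofunctors are exact and preserve small coproducts;
`F : S ⥤ T` (the functor `f^*`) is an exact strong monoidal functor preserving small
coproducts, with a right adjoint `Fst : T ⥤ S` (the functor `f_*`) which is exact and
preserves small coproducts, satisfying the projection formula
`A ⊗ f_*(B) ≅ f_*(B ⊗ f^*A)`. -/

variable {S : Type u} [Category.{v} S] {T : Type u₂} [Category.{v} T]
  [HasZeroObject S] [Preadditive S] [HasShift S ℤ]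
  [∀ n : ℤ, (shiftFunctor S n).Additive] [Pretriangulated S] [HasCoproducts.{v} S]
  [HasZeroObject T] [Preadditive T] [HasShift T ℤ]
  [∀ n : ℤ, (shiftFunctor T n).Additive] [Pretriangulated T] [HasCoproducts.{v} T]
  [MonoidalCategory S] [SymmetricCategory S] [MonoidalCategory T] [SymmetricCategory T]
  [∀ X : S, (tensorRight X).CommShift ℤ] [∀ X : S, (tensorRight X).IsTriangulated]
  [∀ (X : S) (J : Type v), PreservesColimitsOfShape (Discrete J) (tensorRight X)]
  [∀ X : T, (tensorRight X).CommShift ℤ] [∀ X : T, (tensorRight X).IsTriangulated]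
  [∀ (X : T) (J : Type v), PreservesColimitsOfShape (Discrete J) (tensorRight X)]
  (F : S ⥤ T) [F.Monoidal] [F.CommShift ℤ] [F.IsTriangulated]
  [∀ J : Type v, PreservesColimitsOfShape (Discrete J) F]
  (Fst : T ⥤ S) [Fst.CommShift ℤ] [Fst.IsTriangulated]
  [∀ J : Type v, PreservesColimitsOfShape (Discrete J) Fst]

/--
in the tensor-triangulated adjunction setting, if `G` is a strong
⊕-generator for 𝒯, then `f_* G` is a strong ⊕-generator for 𝒮 if and only if the unit
`1_𝒮` belongs to `⟨f_* G⟩̄ₙ` for some `n ≥ 0`.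
-/
theorem statement5 (adj : F ⊣ Fst)
    (proj : ∀ (A : S) (B : T), Nonempty ((A ⊗ Fst.obj B) ≅ Fst.obj (B ⊗ F.obj A)))
    (G : T) (hG : ∃ l : ℕ, bigLevel G l = (Set.univ : Set T)) :
    (∃ m : ℕ, bigLevel (Fst.obj G) m = (Set.univ : Set S)) ↔
      (∃ n : ℕ, (𝟙_ S) ∈ bigLevel (Fst.obj G) n) := by
  constructor
  · rintro ⟨m, hm⟩
    exact ⟨m, hm ▸ Set.mem_univ _⟩
  · rintro ⟨n, hn⟩
    obtain ⟨l, hl⟩ := hG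
    refine ⟨n * (l + 1) + l + 1, Set.eq_univ_of_forall fun X => ?_⟩
    obtain ⟨e⟩ := proj X G
    have hone : bigOne (Fst.obj G ⊗ X) ⊆ bigLevel (Fst.obj G) (l + 1) := by
      intro Y hY
      obtain ⟨Z, hZ⟩ := exists_retract_of_mem_bigOne_map Fst
        (bigOne_subset_of_iso (β_ (Fst.obj G) X ≪≫ e) hY)
      have hZl : Z ∈ bigLevel G l := hl ▸ Set.mem_univ Z
      exact bigLevel_retract (bigLevel_succ (map_mem_bigLevel Fst hZl)) hZ
    have hX : (𝟙_ S ⊗ X) ∈ bigLevel (Fst.obj G ⊗ X) (n + 1) :=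
      map_mem_bigLevel (tensorRight X) (bigLevel_succ hn)
    exact bigLevel_retract (bigLevel_subset_of_bigOne_subset hone n hX)
      (IsRetract.of_iso (λ_ X).symm)

end Adjunction

end Stmt
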